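/- arXiv:1601.07988 — 2 statements merged into one kernel-verified Lean document; each statement's English description precedes it below -/
import Mathlib

section
/- For every n ≥ 2, the number of words L ∈ 𝓛_n with exactly one P1-match and no P6-match (equivalently, paths with exactly one east step below the subdiagonal y = x − 1 and no north step above the superdiagonal y = x + 1) equals (n−1)·2^{n−2}. -/
/-!
Words over the alphabet {E, N} are encoded as `List Bool`,
with `true` representing an east step `E` and `false` a north step `N`.
The word `w = w_1 ⋯ w_{2n}` corresponds to the lattice path from `(0,0)` to
`(n,n)` whose `j`-th step is east if `w_j = true` and north if `w_j = false`.
-/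

/-- `w ∈ 𝓛_n`: the word `w` has exactly `n` `E`'s and `n` `N`'s. -/
def memL (n : ℕ) (w : List Bool) : Prop :=
  w.count true = n ∧ w.count false = n

/-- The (0-indexed, increasing) list of positions at which the letter `b` occurs in `w`. -/
def occPos (w : List Bool) (b : Bool) : List ℕ :=
  (List.range w.length).filter (fun j => w.getD j (!b) == b)

/-- `ps_w({i, i+1})` (with `i` 1-indexed): the length-4 word obtained from `w` by
deleting, for each `j ∉ {i, i+1}`, the `j`-th occurrence of `E` and the `j`-th
occurrence of `N` (counted from left to right); i.e. the word formed by the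
`i`-th and `(i+1)`-th occurrences of `E` and of `N`, read in their original order. -/
def pairedSubword (w : List Bool) (i : ℕ) : List Bool :=
  let keep : List ℕ := [(occPos w true).getD (i-1) 0, (occPos w true).getD i 0,
                        (occPos w false).getD (i-1) 0, (occPos w false).getD i 0]
  ((List.range w.length).filter (fun j => keep.contains j)).map (fun j => w.getD j true)

/-- `P`-mch(w): the number of paired steps `i` with `1 ≤ i ≤ n-1` at which the
paired pattern `P` matches in `w ∈ 𝓛_n`. -/
def pmch (n : ℕ) (P w : List Bool) : ℕ :=
  ((Finset.Icc 1 (n-1)).filter (fun i => pairedSubword w i = P)).card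

def P1 : List Bool := [true, true, false, false]   -- EENN
def P2 : List Bool := [true, false, true, false]   -- ENEN
def P3 : List Bool := [false, true, true, false]   -- NEEN
def P4 : List Bool := [true, false, false, true]   -- ENNE
def P5 : List Bool := [false, true, false, true]   -- NENE
def P6 : List Bool := [false, false, true, true]   -- NNEE

/-- For each occurrence of `b` in `w`, the number of occurrences of the other letter before it. -/
def nb (b : Bool) : List Bool → List ℕ
  | [] => []
  | c :: w => if c = b then 0 :: nb b w else (nb b w).map (· + 1)

/-- Number of `b`-steps starting at height at least 1 (`b`-steps go up). -/
def upc (b : Bool) : ℤ → List Bool → ℕ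
  | _, [] => 0
  | h, c :: w => if c = b then (if 1 ≤ h then 1 else 0) + upc b (h + 1) w else upc b (h - 1) w

lemma nb_length (b : Bool) (w : List Bool) : (nb b w).length = w.count b := by
  induction w with
  | nil => simp [nb]
  | cons c w ih =>
    by_cases h : c = b
    · simp [nb, h, ih]
    · simp [nb, h, ih]

lemma occPos_cons (c : Bool) (w : List Bool) (b : Bool) :
    occPos (c :: w) b = (if c = b then [0] else []) ++ (occPos w b).map (· + 1) := by
  unfold occPos
  rw [List.length_cons, List.range_succ_eq_map, List.filter_cons, List.filter_map]
  by_cases h : c = b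
  · simp [h, Function.comp_def]
  · simp [h, Function.comp_def]

lemma occPos_length (w : List Bool) (b : Bool) : (occPos w b).length = w.count b := by
  induction w with
  | nil => simp [occPos]
  | cons c w ih =>
    rw [occPos_cons]
    by_cases h : c = b
    · simp [h, ih]
    · simp [h, ih]

lemma occ_lt_iff (b : Bool) (w : List Bool) : ∀ i j, i < w.count b → j < w.count (!b) →
    ((occPos w b).getD i 0 < (occPos w (!b)).getD j 0 ↔ (nb b w).getD i 0 ≤ j) := by
  induction w with
  | nil => simp
  | cons c w ih =>
    intro i j hi hj
    rw [occPos_cons, occPos_cons]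
    have l1 := occPos_length w b
    have l2 := occPos_length w (!b)
    have l3 := nb_length b w
    by_cases h : c = b
    · subst h
      have hj' : j < w.count (!c) := by simpa using hj
      cases i with
      | zero => simp [nb, List.getD_eq_getElem?_getD, List.getElem?_eq_getElem (l2 ▸ hj')]
      | succ i =>
        have hi' : i < w.count c := by simpa using hi
        have := ih i j hi' hj'
        simp only [List.getD_eq_getElem?_getD, List.getElem?_eq_getElem (l2 ▸ hj'),
          List.getElem?_eq_getElem (l1 ▸ hi'), List.getElem?_eq_getElem (l3 ▸ hi')] at this
        simp [nb, List.getD_eq_getElem?_getD, List.getElem?_eq_getElem (l2 ▸ hj'),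
          List.getElem?_eq_getElem (l1 ▸ hi'), List.getElem?_eq_getElem (l3 ▸ hi')]
        simpa using this
    · have hc : c = !b := by cases c <;> cases b <;> simp_all
      have hi' : i < w.count b := by simpa [h] using hi
      cases j with
      | zero => simp [nb, h, hc, List.getD_eq_getElem?_getD, List.getElem?_eq_getElem (l3 ▸ hi')]
      | succ j =>
        have hj' : j < w.count (!b) := by simpa [hc] using hj
        have := ih i j hi' hj'
        simp only [List.getD_eq_getElem?_getD, List.getElem?_eq_getElem (l2 ▸ hj'),
          List.getElem?_eq_getElem (l1 ▸ hi'), List.getElem?_eq_getElem (l3 ▸ hi')] at this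
        simp [nb, hc, List.getD_eq_getElem?_getD, List.getElem?_eq_getElem (l2 ▸ hj'),
          List.getElem?_eq_getElem (l1 ▸ hi'), List.getElem?_eq_getElem (l3 ▸ hi')]
        simpa using this

lemma upc_eq (b : Bool) (w : List Bool) : ∀ h : ℤ, upc b h w =
    ∑ i ∈ Finset.range (w.count b), if ((nb b w).getD i 0 : ℤ) + 1 ≤ i + h then 1 else 0 := by
  induction w with
  | nil => simp [upc]
  | cons c w ih =>
    intro h
    by_cases hc : c = b
    · subst hc
      rw [List.count_cons_self, Finset.sum_range_succ', upc, if_pos rfl, ih, add_comm]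
      congr 1
      · apply Finset.sum_congr rfl
        intro i _
        simp only [nb, if_true, List.getD_cons_succ]
        congr 1
        apply propext
        push_cast
        constructor <;> intro <;> linarith
      · simp [nb]
    · rw [List.count_cons_of_ne hc, upc, if_neg hc, ih]
      apply Finset.sum_congr rfl
      intro i hi
      have hi' : i < (nb b w).length := by rw [nb_length]; simpa using hi
      simp only [nb, if_neg hc, List.getD_eq_getElem?_getD, List.getElem?_map,
        List.getElem?_eq_getElem hi', Option.map_some, Option.getD_some]
      congr 1
      apply propext
      push_cast
      constructor <;> intro <;> linarith

lemma occPos_pairwise (w : List Bool) (b : Bool) : (occPos w b).Pairwise (· < ·) :=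
  List.Pairwise.filter _ List.pairwise_lt_range

lemma occPos_getD_lt (w : List Bool) (b : Bool) (i j : ℕ) (hij : i < j) (hj : j < w.count b) :
    (occPos w b).getD i 0 < (occPos w b).getD j 0 := by
  have l := occPos_length w b
  have hj' : j < (occPos w b).length := by omega
  have hi' : i < (occPos w b).length := by omega
  rw [List.getD_eq_getElem _ _ hi', List.getD_eq_getElem _ _ hj']
  exact List.pairwise_iff_getElem.1 (occPos_pairwise w b) i j hi' hj' hij

lemma occPos_getD_spec (w : List Bool) (b : Bool) (i : ℕ) (hi : i < w.count b) :
    (occPos w b).getD i 0 < w.length ∧ w.getD ((occPos w b).getD i 0) true = b := by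
  have l := occPos_length w b
  have hi' : i < (occPos w b).length := by omega
  rw [List.getD_eq_getElem _ _ hi']
  have hm := List.getElem_mem hi'
  generalize (occPos w b)[i] = x at hm
  simp only [occPos, List.mem_filter, List.mem_range] at hm
  obtain ⟨h1, h2⟩ := hm
  refine ⟨h1, ?_⟩
  rw [List.getD_eq_getElem _ _ h1] at h2 ⊢
  simpa using h2

lemma pattern_iff (w : List Bool) (b : Bool) (a0 a1 c0 c1 : ℕ) (p : ℕ → Bool)
    (hp : ∀ j, p j = true ↔ (j = a0 ∨ j = a1 ∨ j = c0 ∨ j = c1))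
    (ha : a0 < a1) (hc : c0 < c1) (la : a1 < w.length) (lc : c1 < w.length)
    (wa0 : w.getD a0 true = b) (wa1 : w.getD a1 true = b)
    (wc0 : w.getD c0 true = !b) (wc1 : w.getD c1 true = !b) :
    ((List.range w.length).filter p).map (fun j => w.getD j true) = [b, b, !b, !b] ↔ a1 < c0 := by
  have hs : ((List.range w.length).filter p).Pairwise (· < ·) :=
    List.Pairwise.filter _ List.pairwise_lt_range
  have hmem : ∀ j, j ∈ (List.range w.length).filter p ↔ (j = a0 ∨ j = a1 ∨ j = c0 ∨ j = c1) := by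
    intro j
    rw [List.mem_filter, hp, List.mem_range]
    constructor
    · exact fun h => h.2
    · intro h; exact ⟨by omega, h⟩
  generalize (List.range w.length).filter p = l at hs hmem
  constructor
  · intro h
    have hlen : l.length = 4 := by simpa using congrArg List.length h
    obtain ⟨x0, x1, x2, x3, rfl⟩ := List.length_eq_four.1 hlen
    · skip
      simp only [List.map_cons, List.map_nil, List.cons.injEq, and_true] at h
      obtain ⟨h0, h1, h2, h3⟩ := h
      have m1 := (hmem a1).2 (by simp)
      have m2 := (hmem c0).2 (by simp)
      simp only [List.mem_cons, List.not_mem_nil, or_false] at m1 m2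
      simp at hs
      have e1 : a1 = x0 ∨ a1 = x1 := by
        rcases m1 with m | m | m | m
        · exact Or.inl m
        · exact Or.inr m
        · rw [m, h2] at wa1; cases b <;> simp at wa1
        · rw [m, h3] at wa1; cases b <;> simp at wa1
      have e2 : c0 = x2 ∨ c0 = x3 := by
        rcases m2 with m | m | m | m
        · rw [m, h0] at wc0; cases b <;> simp at wc0
        · rw [m, h1] at wc0; cases b <;> simp at wc0
        · exact Or.inl m
        · exact Or.inr m
      omega
  · intro h
    have : l = [a0, a1, c0, c1] := by
      have hs2 : [a0, a1, c0, c1].Pairwise (· < ·) := by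
        simp; omega
      apply List.Perm.eq_of_pairwise (le := (· < ·)) _ hs hs2
      · rw [List.perm_ext_iff_of_nodup (hs.imp (fun h => Nat.ne_of_lt h))
          (hs2.imp (fun h => Nat.ne_of_lt h))]
        intro j; rw [hmem]; simp
      · intro x y _ _ h1 h2; omega
    rw [this]
    simp only [List.map_cons, List.map_nil, wa0, wa1, wc0, wc1]

lemma paired_iff (w : List Bool) (b : Bool) (i : ℕ) (h1 : 1 ≤ i) (hb : i < w.count b)
    (hb' : i < w.count (!b)) :
    pairedSubword w i = [b, b, !b, !b] ↔ (nb b w).getD i 0 + 1 ≤ i := by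
  have key := occ_lt_iff b w i (i - 1) hb (by omega)
  have : ((nb b w).getD i 0 + 1 ≤ i ↔ (nb b w).getD i 0 ≤ i - 1) := by omega
  rw [this, ← key]
  unfold pairedSubword
  apply pattern_iff w b ((occPos w b).getD (i-1) 0) ((occPos w b).getD i 0)
    ((occPos w (!b)).getD (i-1) 0) ((occPos w (!b)).getD i 0)
  · intro j
    cases b
    · simp only [List.contains_iff_mem, List.mem_cons, List.not_mem_nil, Bool.not_false]; tauto
    · simp only [List.contains_iff_mem, List.mem_cons, List.not_mem_nil, Bool.not_true]; tauto
  · exact occPos_getD_lt _ _ _ _ (by omega) hb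
  · exact occPos_getD_lt _ _ _ _ (by omega) hb'
  · exact (occPos_getD_spec _ _ _ hb).1
  · exact (occPos_getD_spec _ _ _ hb').1
  · exact (occPos_getD_spec _ _ _ (by omega)).2
  · exact (occPos_getD_spec _ _ _ hb).2
  · exact (occPos_getD_spec _ _ _ (by omega)).2
  · exact (occPos_getD_spec _ _ _ hb').2

lemma pmch_eq (n : ℕ) (w : List Bool) (b : Bool) (hb : w.count b = n) (hb' : w.count (!b) = n) :
    pmch n [b, b, !b, !b] w = upc b 0 w := by
  rw [upc_eq, pmch, hb, ← Finset.card_filter]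
  congr 1
  ext i
  simp only [Finset.mem_filter, Finset.mem_Icc, Finset.mem_range, add_zero]
  constructor
  · rintro ⟨⟨h1, h2⟩, h3⟩
    rw [paired_iff w b i h1 (by omega) (by omega)] at h3
    exact ⟨by omega, by exact_mod_cast h3⟩
  · rintro ⟨h1, h2⟩
    have h2' : (nb b w).getD i 0 + 1 ≤ i := by exact_mod_cast h2
    refine ⟨by omega, ?_⟩
    rwa [paired_iff w b i (by omega) (by omega) (by omega)]

/-- Words staying within height `[-1, 1]`. -/
def setA : ℕ → Finset (List Bool)
  | 0 => {[]}
  | n + 1 => (setA n).image (fun w => true :: false :: w) ∪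
      (setA n).image (fun w => false :: true :: w)

/-- Words with exactly one excursion to height 2. -/
def setB : ℕ → Finset (List Bool)
  | 0 => ∅
  | 1 => ∅
  | n + 2 => ((setB (n + 1)).image (fun w => true :: false :: w) ∪
      (setB (n + 1)).image (fun w => false :: true :: w)) ∪
      (setA n).image (fun w => true :: true :: false :: false :: w)

lemma mem_setA (n : ℕ) : ∀ w, w ∈ setA n ↔ memL n w ∧ upc true 0 w = 0 ∧ upc false 0 w = 0 := by
  induction n with
  | zero =>
    intro w
    match w with
    | [] => simp [setA, memL, upc]
    | true :: w => simp [setA, memL]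
    | false :: w => simp [setA, memL]
  | succ n ih =>
    intro w
    simp only [setA, Finset.mem_union, Finset.mem_image, ih]
    match w with
    | [] => simp [memL]
    | [true] => simp [memL]
    | [false] => simp [memL]
    | true :: true :: w => simp [upc]
    | false :: false :: w => simp [upc]
    | true :: false :: w => simp [upc, memL]
    | false :: true :: w => simp [upc, memL]

lemma mem_setB (n : ℕ) : ∀ w, w ∈ setB n ↔ memL n w ∧ upc true 0 w = 1 ∧ upc false 0 w = 0 := by
  induction n with
  | zero =>
    intro w
    match w with
    | [] => simp [setB, memL, upc]
    | true :: w => simp [setB, memL]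
    | false :: w => simp [setB, memL]
  | succ n ih =>
    intro w
    match n, ih with
    | 0, ih =>
      simp only [setB]
      match w with
      | [] => simp [memL]
      | [true] => simp [memL]
      | [false] => simp [memL]
      | true :: true :: w => simp [memL]
      | false :: false :: w => simp [memL]
      | true :: false :: w =>
        have := ih w
        simp [setB, memL] at this
        simpa [upc, memL] using this
      | false :: true :: w =>
        have := ih w
        simp [setB, memL] at this
        simpa [upc, memL] using this
    | n + 1, ih =>
      simp only [setB, Finset.mem_union, Finset.mem_image, ih, mem_setA]
      match w with
      | [] => simp [memL]
      | [true] => simp [memL]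
      | [false] => simp [memL]
      | false :: false :: w => simp [upc]
      | true :: false :: w => simp [upc, memL]
      | false :: true :: w => simp [upc, memL]
      | [true, true] => simp [memL]
      | true :: true :: true :: w => simp [upc]
      | [true, true, false] => simp [memL]
      | true :: true :: false :: true :: w => simp [upc]
      | true :: true :: false :: false :: w => simp [upc, memL]

lemma card_setA (n : ℕ) : (setA n).card = 2 ^ n := by
  induction n with
  | zero => simp [setA]
  | succ n ih =>
    rw [setA, Finset.card_union_of_disjoint, Finset.card_image_of_injective,
      Finset.card_image_of_injective, ih]
    · ring
    · intro x y h; simpa using h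
    · intro x y h; simpa using h
    · rw [Finset.disjoint_left]; intro x; simp only [Finset.mem_image]
      rintro ⟨y, _, rfl⟩ ⟨z, _, h⟩; simp at h

lemma card_setB (n : ℕ) : (setB (n + 2)).card = (n + 1) * 2 ^ n := by
  have step : ∀ n, (setB (n + 2)).card = 2 * (setB (n + 1)).card + 2 ^ n := by
    intro n
    rw [setB, Finset.card_union_of_disjoint, Finset.card_union_of_disjoint,
      Finset.card_image_of_injective, Finset.card_image_of_injective,
      Finset.card_image_of_injective, card_setA]
    · ring
    · intro x y h; simpa using h
    · intro x y h; simpa using h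
    · intro x y h; simpa using h
    · rw [Finset.disjoint_left]; intro x; simp only [Finset.mem_image]
      rintro ⟨y, _, rfl⟩ ⟨z, _, h⟩; simp at h
    · rw [Finset.disjoint_left]; intro x; simp only [Finset.mem_image, Finset.mem_union]
      rintro (⟨y, _, rfl⟩ | ⟨y, _, rfl⟩) ⟨z, _, h⟩ <;> simp at h
  induction n with
  | zero => rw [step]; simp [setB]
  | succ n ih => rw [step, ih]; ring

theorem count_one_P1_no_P6 (n : ℕ) (hn : 2 ≤ n) :
    {w : List Bool | memL n w ∧ pmch n P1 w = 1 ∧ pmch n P6 w = 0}.ncard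
      = (n-1) * 2^(n-2) := by
  have h : {w : List Bool | memL n w ∧ pmch n P1 w = 1 ∧ pmch n P6 w = 0} = ↑(setB n) := by
    ext w
    simp only [Set.mem_setOf_eq, Finset.mem_coe, mem_setB]
    refine and_congr_right fun hw => ?_
    have h1 : pmch n P1 w = upc true 0 w := pmch_eq n w true hw.1 hw.2
    have h2 : pmch n P6 w = upc false 0 w := pmch_eq n w false hw.2 hw.1
    rw [h1, h2]
  rw [h, Set.ncard_coe_finset]
  obtain ⟨m, rfl⟩ := Nat.exists_eq_add_of_le' hn
  rw [card_setB]
  rfl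
end

section
/- For every n ≥ 2, the number of words L ∈ 𝓛_n that bounce off the diagonal an odd number of times equals 2·binom(2n−2, n−2). -/
/-- The path of `w` passes through the interior diagonal point `[i,i]`:
the prefix `w_1 ⋯ w_{2i}` contains exactly `i` `E`'s and `i` `N`'s. -/
abbrev onDiag (w : List Bool) (i : ℕ) : Prop :=
  (w.take (2*i)).count true = i ∧ (w.take (2*i)).count false = i

/-- The number of crossings of the diagonal: interior diagonal points `[i,i]` with
`w_{2i} = w_{2i+1}`. -/
def crossCount (n : ℕ) (w : List Bool) : ℕ :=
  ((Finset.Icc 1 (n-1)).filter (fun i =>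
    onDiag w i ∧ w.getD (2*i-1) false = w.getD (2*i) false)).card

/-- The number of bounces off the diagonal: interior diagonal points `[i,i]` with
`w_{2i} ≠ w_{2i+1}`. -/
def bounceCount (n : ℕ) (w : List Bool) : ℕ :=
  ((Finset.Icc 1 (n-1)).filter (fun i =>
    onDiag w i ∧ w.getD (2*i-1) false ≠ w.getD (2*i) false)).card

/-- Bounces of the word `w`, with last step `b` before it, for a path ending on the diagonal. -/
def bnc : Bool → List Bool → ℕ
  | _, [] => 0
  | b, c :: t => (if (c :: t).count true = (c :: t).count false ∧ b ≠ c then 1 else 0) + bnc c t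

/-- All words with `e` east steps and `m` north steps. -/
def wds : ℕ → ℕ → List (List Bool)
  | 0, 0 => [[]]
  | 0, m + 1 => (wds 0 m).map (List.cons false)
  | e + 1, 0 => (wds e 0).map (List.cons true)
  | e + 1, m + 1 => (wds e (m + 1)).map (List.cons true) ++ (wds (e + 1) m).map (List.cons false)

theorem mem_wds : ∀ (w : List Bool) (e m : ℕ),
    w ∈ wds e m ↔ w.count true = e ∧ w.count false = m := by
  intro w
  induction w with
  | nil =>
    intro e m
    rcases e with _ | e <;> rcases m with _ | m <;> simp [wds]
  | cons c t ih =>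
    intro e m
    rcases e with _ | e <;> rcases m with _ | m <;> cases c <;> simp [wds, ih]

theorem nodup_wds : ∀ (e m : ℕ), (wds e m).Nodup
  | 0, 0 => by simp [wds]
  | 0, m + 1 => by
    rw [wds]; exact (nodup_wds 0 m).map (List.cons_injective)
  | e + 1, 0 => by
    rw [wds]; exact (nodup_wds e 0).map (List.cons_injective)
  | e + 1, m + 1 => by
    rw [wds, List.nodup_append]
    refine ⟨(nodup_wds e (m+1)).map (List.cons_injective),
      (nodup_wds (e+1) m).map (List.cons_injective), ?_⟩
    intro a ha b hb
    simp only [List.mem_map] at ha hb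
    obtain ⟨x, _, rfl⟩ := ha
    obtain ⟨y, _, rfl⟩ := hb
    simp

theorem length_wds : ∀ (e m : ℕ), (wds e m).length = (e + m).choose e
  | 0, 0 => by simp [wds]
  | 0, m + 1 => by simp [wds, length_wds 0 m]
  | e + 1, 0 => by simp [wds, length_wds e 0]
  | e + 1, m + 1 => by
    rw [wds, List.length_append, List.length_map, List.length_map, length_wds e (m+1),
      length_wds (e+1) m, show e + 1 + (m + 1) = (e + (m + 1)) + 1 by ring,
      Nat.choose_succ_succ, show e + 1 + m = e + (m + 1) by ring]

/-- Signed sum. -/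
def sg (e m : ℕ) (b : Bool) : ℤ := ((wds e m).map (fun w => (-1 : ℤ) ^ bnc b w)).sum

theorem sum_cons (e m : ℕ) (b c : Bool) (e' m' : ℕ)
    (h : ∀ w ∈ wds e m, (c :: w).count true = e' ∧ (c :: w).count false = m') :
    (((wds e m).map (List.cons c)).map (fun w => (-1 : ℤ) ^ bnc b w)).sum
      = (if e' = m' ∧ b ≠ c then -1 else 1) * sg e m c := by
  rw [sg, List.map_map, ← List.sum_map_mul_left]
  congr 1
  apply List.map_congr_left
  intro w hw
  obtain ⟨h1, h2⟩ := h w hw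
  simp only [Function.comp, bnc, h1, h2, pow_add]
  split_ifs <;> simp

theorem sg_zero_zero (b : Bool) : sg 0 0 b = 1 := by simp [sg, wds, bnc]

theorem sg_zero_succ (m : ℕ) (b : Bool) : sg 0 (m + 1) b = sg 0 m false := by
  rw [sg, wds, sum_cons 0 m b false 0 (m+1)]
  · simp
  · intro w hw
    have := (mem_wds w _ _).1 hw
    simp [this]

theorem sg_succ_zero (m : ℕ) (b : Bool) : sg (m + 1) 0 b = sg m 0 true := by
  rw [sg, wds, sum_cons m 0 b true (m+1) 0]
  · simp
  · intro w hw
    have := (mem_wds w _ _).1 hw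
    simp [this]

theorem sg_succ_succ (e m : ℕ) (b : Bool) : sg (e + 1) (m + 1) b =
    (if e = m ∧ b ≠ true then -1 else 1) * sg e (m + 1) true
    + (if e = m ∧ b ≠ false then -1 else 1) * sg (e + 1) m false := by
  rw [sg, wds, List.map_append, List.sum_append, sum_cons e (m+1) b true (e+1) (m+1),
    sum_cons (e+1) m b false (e+1) (m+1)]
  · simp
  · intro w hw
    have := (mem_wds w _ _).1 hw
    simp [this]
  · intro w hw
    have := (mem_wds w _ _).1 hw
    simp [this]

theorem sg_zero_left (m : ℕ) (b : Bool) : sg 0 m b = 1 := by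
  induction m generalizing b with
  | zero => exact sg_zero_zero b
  | succ m ih => rw [sg_zero_succ, ih]

theorem sg_zero_right (m : ℕ) (b : Bool) : sg m 0 b = 1 := by
  induction m generalizing b with
  | zero => exact sg_zero_zero b
  | succ m ih => rw [sg_succ_zero, ih]

/-- Closed form, up to sign. -/
def dd (e m : ℕ) : ℤ := ((e + m - 1).choose e : ℤ) - ((e + m - 1).choose m : ℤ)

theorem dd_succ (e m : ℕ) : dd (e + 1) (m + 1) = dd e (m + 1) + dd (e + 1) m := by
  simp only [dd]
  rw [show e + 1 + (m + 1) - 1 = (e + m) + 1 by omega, show e + (m + 1) - 1 = e + m by omega,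
    show e + 1 + m - 1 = e + m by omega, Nat.choose_succ_succ, Nat.choose_succ_succ]
  push_cast
  ring

theorem dd_swap (e m : ℕ) : dd e m = - dd m e := by
  simp only [dd, add_comm e m]; ring

theorem sg_formula : ∀ (k e m : ℕ) (b : Bool), e + m = k → 0 < k →
    sg e m b = if e ≤ m then dd e m else - dd e m := by
  intro k
  induction k with
  | zero => intro e m b _ h; omega
  | succ k ih =>
    intro e m b hk _
    rcases e with _ | e
    · rcases m with _ | m
      · omega
      · rw [sg_zero_left]; simp [dd]
    · rcases m with _ | m
      · rw [sg_zero_right]; simp [dd]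
      · rw [sg_succ_succ, ih e (m+1) true (by omega) (by omega),
          ih (e+1) m false (by omega) (by omega), dd_succ]
        have hs : ∀ x, dd x x = 0 := fun x => by simp [dd]
        rcases lt_trichotomy e m with h | h | h
        · simp [show e ≠ m by omega, show e ≤ m + 1 by omega, show e + 1 ≤ m by omega, show e ≤ m by omega]
        · subst h
          have := dd_swap e (e+1)
          rw [if_pos (by omega : e ≤ e + 1), if_neg (by omega : ¬ e + 1 ≤ e),
            if_pos (le_refl _), this]
          cases b <;> simp
        · have h1 : (if e ≤ m + 1 then dd e (m+1) else - dd e (m+1)) = - dd e (m+1) := by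
            by_cases h' : e = m + 1
            · subst h'; simp [hs]
            · rw [if_neg (by omega)]
          rw [h1]
          simp [show e ≠ m by omega, show ¬ e + 1 ≤ m by omega, show ¬ e ≤ m by omega]
          ring

theorem bnc_eq (w : List Bool) : ∀ b : Bool, bnc b w =
    ((Finset.range w.length).filter (fun j =>
      (w.drop j).count true = (w.drop j).count false ∧
        (b :: w).getD j false ≠ w.getD j false)).card := by
  induction w with
  | nil => intro b; simp [bnc]
  | cons c t ih =>
    intro b
    rw [bnc, ih c, Finset.card_filter, Finset.card_filter, List.length_cons,
      Finset.sum_range_succ', add_comm]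
    simp only [List.drop_succ_cons, List.getD_cons_succ, List.getD_cons_zero, List.drop_zero]

theorem bounce_eq (n : ℕ) (c : Bool) (t : List Bool) (h : memL n (c :: t)) :
    bounceCount n (c :: t) = bnc c t := by
  have h0 : bnc c t = bnc c (c :: t) := by simp [bnc]
  rw [h0, bnc_eq]
  generalize hw : c :: t = w at *
  obtain ⟨h1, h2⟩ := h
  have hlen : w.length = 2 * n := by
    have := List.count_true_add_count_false w
    omega
  have hsplit : ∀ (j : ℕ) (b : Bool), (w.take j).count b + (w.drop j).count b = w.count b := by
    intro j b
    rw [← List.count_append, List.take_append_drop]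
  have htl : ∀ j, j ≤ 2 * n → (w.take j).count true + (w.take j).count false = j := by
    intro j hj
    rw [List.count_true_add_count_false, List.length_take]; omega
  unfold bounceCount
  refine Finset.card_bij (fun i _ => 2 * i) ?_ ?_ ?_
  · intro i hi
    simp only [Finset.mem_filter, Finset.mem_Icc, onDiag, Finset.mem_range] at hi ⊢
    obtain ⟨⟨hi1, hi2⟩, ⟨ha, hb⟩, hne⟩ := hi
    have e1 := hsplit (2*i) true
    have e2 := hsplit (2*i) false
    refine ⟨by omega, by omega, ?_⟩
    obtain ⟨k, hk⟩ : ∃ k, 2 * i = k + 1 := ⟨2 * i - 1, by omega⟩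
    rw [hk] at hne ⊢
    simpa only [List.getD_cons_succ, Nat.add_sub_cancel] using hne
  · intro a _ b _ hab
    omega
  · intro j hj
    simp only [Finset.mem_filter, Finset.mem_range] at hj
    obtain ⟨hj1, ha, hne⟩ := hj
    have e1 := hsplit j true
    have e2 := hsplit j false
    have e3 := htl j (by omega)
    rcases j with _ | k
    · exfalso; apply hne; rw [← hw]; simp
    · refine ⟨(w.take (k+1)).count true, ?_, by omega⟩
      have hk : 2 * (w.take (k+1)).count true = k + 1 := by omega
      simp only [Finset.mem_filter, Finset.mem_Icc, onDiag]
      rw [hk]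
      refine ⟨⟨by omega, by omega⟩, ⟨rfl, by omega⟩, ?_⟩
      simpa only [List.getD_cons_succ, Nat.add_sub_cancel] using hne

theorem sum_sign {α : Type} (l : List α) (f : α → ℕ) :
    (l.map (fun w => (-1 : ℤ) ^ f w)).sum
      = l.length - 2 * ((l.filter (fun w => decide (Odd (f w)))).length : ℤ) := by
  induction l with
  | nil => simp
  | cons a l ih =>
    rw [List.map_cons, List.sum_cons, ih]
    by_cases h : Odd (f a)
    · rw [List.filter_cons_of_pos (by simpa using h), h.neg_one_pow]
      push_cast [List.length_cons]; ring
    · rw [List.filter_cons_of_neg (by simpa using h), (Nat.not_odd_iff_even.1 h).neg_one_pow]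
      push_cast [List.length_cons]; ring

theorem count_odd_bounces (n : ℕ) (hn : 2 ≤ n) :
    {w : List Bool | memL n w ∧ Odd (bounceCount n w)}.ncard
      = 2 * (2*n-2).choose (n-2) := by
  have hset : {w : List Bool | memL n w ∧ Odd (bounceCount n w)}
      = (((wds n n).filter (fun w => decide (Odd (bounceCount n w)))).toFinset : Set (List Bool)) := by
    ext w
    simp [mem_wds, memL]
  rw [hset, Set.ncard_coe_finset, List.toFinset_card_of_nodup ((nodup_wds n n).filter _)]
  have hs := sum_sign (wds n n) (bounceCount n)
  obtain ⟨k, rfl⟩ : ∃ k, n = k + 2 := ⟨n - 2, by omega⟩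
  have key : ((wds (k+2) (k+2)).map (fun w => (-1 : ℤ) ^ bounceCount (k+2) w)).sum
      = sg (k+1) (k+2) true + sg (k+2) (k+1) false := by
    conv_lhs => rw [show k + 2 = (k + 1) + 1 from rfl, wds]
    rw [List.map_append, List.sum_append, List.map_map, List.map_map, sg, sg]
    congr 2
    · apply List.map_congr_left
      intro w hw
      have := (mem_wds w _ _).1 hw
      simp only [Function.comp]
      rw [bounce_eq]
      simp [memL, this]
    · apply List.map_congr_left
      intro w hw
      have := (mem_wds w _ _).1 hw
      simp only [Function.comp]
      rw [bounce_eq]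
      simp [memL, this]
  rw [key, length_wds, sg_formula _ _ _ _ rfl (by omega), sg_formula _ _ _ _ rfl (by omega),
    if_pos (by omega), if_neg (by omega), dd_swap (k+2) (k+1)] at hs
  simp only [dd] at hs
  rw [show k + 1 + (k + 2) - 1 = 2 * k + 2 by omega,
    show k + 2 + (k + 2) = (2 * k + 2) + 1 + 1 by ring, Nat.choose_succ_succ (2*k+2+1) (k+1),
    Nat.choose_succ_succ (2*k+2) k, Nat.choose_succ_succ (2*k+2) (k+1)] at hs
  have hsym : (2*k+2).choose (k+2) = (2*k+2).choose k := by
    apply Nat.choose_symm_of_eq_add; ring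
  rw [show 2 * (k + 2) - 2 = 2 * k + 2 by omega, show k + 2 - 2 = k by omega]
  simp only [Nat.succ_eq_add_one, add_assoc, Nat.reduceAdd] at hs hsym ⊢
  rw [hsym] at hs
  push_cast at hs
  omega
end
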